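/- (Weighted Szemerédi–Trotter theorem.) There exists an absolute constant C > 0 such that the following holds. Let P be a finite set of points in ℝ², L a finite set of affine lines in ℝ², and let w : P ∪ L → ℝ_{>0} be a positive weight function. Set w_P = max_{p∈P} w(p), w_L = max_{l∈L} w(l), W_P = Σ_{p∈P} w(p), W_L = Σ_{l∈L} w(l). Then the number of weighted incidences I_w = Σ_{p∈P, l∈L, p∈l} w(p)·w(l) satisfies I_w ≤ C·((w_P·w_L)^(1/3)·(W_P·W_L)^(2/3) + w_P·W_L + w_L·W_P). -/

import Mathlib

open Finset
open scoped Classical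

/-- `l ⊆ ℝ²` is an affine line: the solution set of a nontrivial linear equation. -/
def IsAffineLine (l : Set (ℝ × ℝ)) : Prop :=
  ∃ a b c : ℝ, (a, b) ≠ (0, 0) ∧ l = {p : ℝ × ℝ | a * p.1 + b * p.2 = c}

structure STEdge where
  p : ℝ × ℝ
  q : ℝ × ℝ
  m : ℝ × ℝ

def STInc (p m : ℝ × ℝ) : Prop := p.2 = m.1 * p.1 + m.2

def STIsEdge (e : STEdge) : Prop := e.p.1 < e.q.1 ∧ STInc e.p e.m ∧ STInc e.q e.m

def STCross (e f : STEdge) : Prop :=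
  ∃ x : ℝ, e.p.1 < x ∧ x < e.q.1 ∧ f.p.1 < x ∧ x < f.q.1 ∧
    e.m.1 * x + e.m.2 = f.m.1 * x + f.m.2

lemma STCross_of_sign (e f : STEdge) (x0 x1 : ℝ) (h01 : x0 < x1)
    (he0 : e.p.1 ≤ x0) (hf0 : f.p.1 ≤ x0) (he1 : x1 ≤ e.q.1) (hf1 : x1 ≤ f.q.1)
    (h0 : f.m.1 * x0 + f.m.2 < e.m.1 * x0 + e.m.2)
    (h1 : e.m.1 * x1 + e.m.2 < f.m.1 * x1 + f.m.2) : STCross e f := by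
  have hs : 0 < f.m.1 - e.m.1 := by
    by_contra h
    nlinarith
  have hx : (f.m.1 - e.m.1) * ((e.m.2 - f.m.2) / (f.m.1 - e.m.1)) = e.m.2 - f.m.2 := by
    field_simp
  set x := (e.m.2 - f.m.2) / (f.m.1 - e.m.1) with hxd
  have hx0 : x0 < x := by
    by_contra h
    nlinarith
  have hx1 : x < x1 := by
    by_contra h
    nlinarith
  exact ⟨x, by linarith, by linarith, by linarith, by linarith, by linarith⟩

/-- the wedge data: `e` and the next edge `f` at the same left vertex, `w` a first point in it. -/
def STWedge (V : Finset (ℝ × ℝ)) (E : Finset STEdge) (e f : STEdge) (w : ℝ × ℝ) : Prop :=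
  f ∈ E ∧ f.p = e.p ∧ e.m.1 < f.m.1 ∧
  (∀ g ∈ E, g.p = e.p → g.m.1 < f.m.1 → g.m.1 ≤ e.m.1) ∧
  w ∈ V ∧ e.p.1 < w.1 ∧ w.1 ≤ e.q.1 ∧ w.1 ≤ f.q.1 ∧
  e.m.1 * w.1 + e.m.2 ≤ w.2 ∧ w.2 ≤ f.m.1 * w.1 + f.m.2 ∧
  ∀ r ∈ V, e.p.1 < r.1 → r.1 < w.1 → e.m.1 * r.1 + e.m.2 ≤ r.2 →
    r.2 ≤ f.m.1 * r.1 + f.m.2 → False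

lemma STWedge_exists (V : Finset (ℝ × ℝ)) (E : Finset STEdge)
    (hE : ∀ e ∈ E, STIsEdge e ∧ e.p ∈ V ∧ e.q ∈ V)
    (e : STEdge) (he : e ∈ E) (hnt : ∃ f ∈ E, f.p = e.p ∧ e.m.1 < f.m.1) :
    ∃ f w, STWedge V E e f w := by
  obtain ⟨f, hf, hfmin⟩ := exists_min_image (E.filter fun f => f.p = e.p ∧ e.m.1 < f.m.1)
    (fun f => f.m.1) (by obtain ⟨f, hf, h⟩ := hnt; exact ⟨f, by simp [hf, h]⟩)
  simp only [mem_filter] at hf hfmin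
  obtain ⟨hfE, hfp, hfs⟩ := hf
  obtain ⟨⟨e1, e2, e3⟩, e4, e5⟩ := hE e he
  obtain ⟨⟨f1, f2, f3⟩, f4, f5⟩ := hE f hfE
  unfold STInc at *
  rw [hfp] at f1 f2 f4
  have hne : (V.filter fun w => e.p.1 < w.1 ∧ w.1 ≤ e.q.1 ∧ w.1 ≤ f.q.1 ∧
      e.m.1 * w.1 + e.m.2 ≤ w.2 ∧ w.2 ≤ f.m.1 * w.1 + f.m.2).Nonempty := by
    rcases le_total e.q.1 f.q.1 with h | h
    · refine ⟨e.q, ?_⟩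
      simp only [mem_filter]
      exact ⟨e5, e1, le_rfl, h, e3.ge, by nlinarith⟩
    · refine ⟨f.q, ?_⟩
      simp only [mem_filter]
      exact ⟨f5, f1, h, le_rfl, by nlinarith, f3.le⟩
  obtain ⟨w, hw, hwmin⟩ := exists_min_image _ (fun w => w.1) hne
  simp only [mem_filter] at hw hwmin
  obtain ⟨w0, w1, w2, w3, w4, w5⟩ := hw
  refine ⟨f, w, hfE, hfp, hfs, ?_, w0, w1, w2, w3, w4, w5, ?_⟩
  · intro g hg hgp hgf
    by_contra h
    push Not at h
    have := hfmin g ⟨hg, hgp, h⟩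
    linarith
  · intro r hr h1 h2 h3 h4
    have := hwmin r ⟨hr, h1, by linarith, by linarith, h3, h4⟩
    linarith

lemma STWedge_left (V : Finset (ℝ × ℝ)) (E : Finset STEdge)
    (hE : ∀ e ∈ E, STIsEdge e ∧ e.p ∈ V ∧ e.q ∈ V)
    (hX : ∀ e ∈ E, ∀ f ∈ E, e ≠ f → ¬ STCross e f)
    (e f e' f' : STEdge) (w : ℝ × ℝ) (he : e ∈ E) (he' : e' ∈ E)
    (h : STWedge V E e f w) (h' : STWedge V E e' f' w)
    (h1 : e'.m.1 * w.1 + e'.m.2 < f.m.1 * w.1 + f.m.2)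
    (h2 : e.m.1 * w.1 + e.m.2 < f'.m.1 * w.1 + f'.m.2)
    (hle : e.p.1 ≤ e'.p.1) : e.p = e'.p := by
  obtain ⟨a1, a2, a3, a4, a5, a6, a7, a8, a9, a10, a11⟩ := h
  obtain ⟨b1, b2, b3, b4, b5, b6, b7, b8, b9, b10, b11⟩ := h'
  obtain ⟨⟨e1, e2, e3⟩, e4, e5⟩ := hE e he
  obtain ⟨⟨f1, f2, f3⟩, f4, f5⟩ := hE f a1
  obtain ⟨⟨e1', e2', e3'⟩, e4', e5'⟩ := hE e' he'
  obtain ⟨⟨f1', f2', f3'⟩, f4', f5'⟩ := hE f' b1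
  unfold STInc at *
  rw [a2] at f1 f2 f4
  rw [b2] at f1' f2' f4'
  have hup : ¬ (f.m.1 * e'.p.1 + f.m.2 < e'.p.2) := by
    intro hh
    refine hX e' he' f a1 (by rintro rfl; exact lt_irrefl _ h1)
      (STCross_of_sign e' f e'.p.1 w.1 b6 le_rfl (by rw [a2]; exact hle) b7 a8 (by linarith) h1)
  have hdown : ¬ (e'.p.2 < e.m.1 * e'.p.1 + e.m.2) := by
    intro hh
    refine hX e he f' b1 (by rintro rfl; exact lt_irrefl _ h2)
      (STCross_of_sign e f' e'.p.1 w.1 b6 hle (by rw [b2]) a7 b8 (by linarith) h2)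
  rcases hle.lt_or_eq with hlt | heq
  · exact (a11 e'.p e4' hlt b6 (not_lt.1 hdown) (not_lt.1 hup)).elim
  · refine Prod.ext heq ?_
    rw [← heq] at hup hdown
    push Not at hup hdown
    linarith

lemma STEdge_same (E : Finset STEdge) (hE : ∀ e ∈ E, STIsEdge e)
    (hX : ∀ e ∈ E, ∀ f ∈ E, e ≠ f → ¬ STCross e f)
    (e f : STEdge) (he : e ∈ E) (hf : f ∈ E) (hp : e.p = f.p) (hm : e.m.1 = f.m.1) : e = f := by
  by_contra hne
  obtain ⟨e1, e2, e3⟩ := hE e he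
  obtain ⟨f1, f2, f3⟩ := hE f hf
  unfold STInc at *
  rw [← hp] at f1 f2
  rw [← hm] at f2
  obtain ⟨x, hx1, hx2⟩ := exists_between (lt_min e1 f1)
  rw [lt_min_iff] at hx2
  refine hX e he f hf hne ⟨x, hx1, hx2.1, by rw [← hp]; exact hx1, hx2.2, ?_⟩
  rw [hm] at e2 f2 ⊢
  linarith

lemma ST_planar (V : Finset (ℝ × ℝ)) (E : Finset STEdge)
    (hE : ∀ e ∈ E, STIsEdge e ∧ e.p ∈ V ∧ e.q ∈ V)
    (hX : ∀ e ∈ E, ∀ f ∈ E, e ≠ f → ¬ STCross e f) : #E ≤ 3 * #V := by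
  have hE' : ∀ e ∈ E, STIsEdge e := fun e he => (hE e he).1
  let N : STEdge → Prop := fun e => ∃ f ∈ E, f.p = e.p ∧ e.m.1 < f.m.1
  have hsplit := card_filter_add_card_filter_not (s := E) N
  have htop : #(E.filter fun e => ¬ N e) ≤ #V := by
    refine card_le_card_of_injOn (fun e => e.p) ?_ ?_
    · intro e he
      simp only [coe_filter, Set.mem_ofPred_eq] at he
      exact (hE e he.1).2.1
    · intro e he f hf hef
      simp only [coe_filter, Set.mem_ofPred_eq, N] at he hf
      obtain ⟨he, he2⟩ := he
      obtain ⟨hf, hf2⟩ := hf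
      push Not at he2 hf2
      exact STEdge_same E hE' hX e f he hf hef
        (le_antisymm (hf2 e he hef) (he2 f hf hef.symm))
  have hnt : #(E.filter N) ≤ #(V ×ˢ (univ : Finset Bool)) := by
    have hch : ∀ e : STEdge, ∃ fw : STEdge × (ℝ × ℝ),
        e ∈ E.filter N → STWedge V E e fw.1 fw.2 := by
      intro e
      by_cases he : e ∈ E.filter N
      · obtain ⟨f, w, h⟩ := STWedge_exists V E hE e (mem_filter.1 he).1 (mem_filter.1 he).2
        exact ⟨(f, w), fun _ => h⟩
      · exact ⟨(e, 0), fun h => (he h).elim⟩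
    choose F hF using hch
    refine card_le_card_of_injOn
      (fun e => ((F e).2, decide (e.m.1 * (F e).2.1 + e.m.2 = (F e).2.2))) ?_ ?_
    · intro e he
      have := hF e he
      simp only [coe_product, Set.mem_prod, mem_coe, mem_univ, and_true]
      exact this.2.2.2.2.1
    · intro e he e' he' hee
      have h := hF e he
      have h' := hF e' he'
      simp only [Prod.mk.injEq, decide_eq_decide] at hee
      obtain ⟨hw, ht⟩ := hee
      rw [← hw] at h' ht
      have heE := (mem_filter.1 he).1
      have heE' := (mem_filter.1 he').1
      have hA := h
      have hB := h'
      obtain ⟨a1, a2, a3, a4, a5, a6, a7, a8, a9, a10, a11⟩ := hA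
      obtain ⟨b1, b2, b3, b4, b5, b6, b7, b8, b9, b10, b11⟩ := hB
      have i1 := (hE' e heE).2.1
      have i2 := (hE' _ a1).2.1
      have i3 := (hE' e' heE').2.1
      have i4 := (hE' _ b1).2.1
      unfold STInc at i1 i2 i3 i4
      rw [a2] at i2
      rw [b2] at i4
      have key : e'.m.1 * (F e).2.1 + e'.m.2 < (F e).1.m.1 * (F e).2.1 + (F e).1.m.2 ∧
          e.m.1 * (F e).2.1 + e.m.2 < (F e').1.m.1 * (F e).2.1 + (F e').1.m.2 := by
        by_cases hh : e.m.1 * (F e).2.1 + e.m.2 = (F e).2.2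
        · have hh' := ht.1 hh
          rw [hh, hh', ]
          constructor
          · nlinarith
          · nlinarith
        · have hh' : ¬ _ := fun h => hh (ht.2 h)
          have := lt_of_le_of_ne a9 hh
          have := lt_of_le_of_ne b9 hh'
          constructor <;> linarith
      have hpp : e.p = e'.p := by
        rcases le_total e.p.1 e'.p.1 with hle | hle
        · exact STWedge_left V E hE hX e _ e' _ _ heE heE' h h' key.1 key.2 hle
        · exact (STWedge_left V E hE hX e' _ e _ _ heE' heE h' h key.2 key.1 hle).symm
      refine STEdge_same E hE' hX e e' heE heE' hpp (le_antisymm ?_ ?_)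
      · apply b4 e heE hpp
        rw [← hpp] at i4
        by_contra hc
        nlinarith [key.2]
      · apply a4 e' heE' hpp.symm
        rw [← hpp] at i3
        by_contra hc
        nlinarith [key.1]
  have : #(V ×ˢ (univ : Finset Bool)) = 2 * #V := by
    rw [card_product]; simp [mul_comm]
  omega

lemma ST_cross1 (V : Finset (ℝ × ℝ)) (E : Finset STEdge)
    (hE : ∀ e ∈ E, STIsEdge e ∧ e.p ∈ V ∧ e.q ∈ V) :
    #E ≤ 3 * #V + #((E ×ˢ E).filter fun t => t.1 ≠ t.2 ∧ STCross t.1 t.2) := by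
  let G : STEdge → Prop := fun e => ∃ f ∈ E, e ≠ f ∧ STCross e f
  have hsplit := card_filter_add_card_filter_not (s := E) G
  have h1 : #(E.filter fun e => ¬ G e) ≤ 3 * #V := by
    apply ST_planar
    · intro e he
      exact hE e (mem_filter.1 he).1
    · intro e he f hf hef hc
      exact (mem_filter.1 he).2 ⟨f, (mem_filter.1 hf).1, hef, hc⟩
  have h2 : #(E.filter G) ≤ #((E ×ˢ E).filter fun t => t.1 ≠ t.2 ∧ STCross t.1 t.2) := by
    refine (card_le_card ?_).trans (card_image_le (f := Prod.fst))
    intro e he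
    obtain ⟨he, f, hf, hh⟩ := mem_filter.1 he
    exact mem_image.2 ⟨(e, f), by simp [he, hf, hh.1, hh.2], rfl⟩
  omega

lemma ST_sample {α : Type*} [DecidableEq α] (P T : Finset α) (hT : T ⊆ P) (p : ℝ) :
    ∑ S ∈ P.powerset, (if T ⊆ S then p ^ #S * (1 - p) ^ (#P - #S) else 0) = p ^ #T := by
  rw [← sum_filter]
  have h : (P.powerset.filter fun S => T ⊆ S) = (P \ T).powerset.image (T ∪ ·) := by
    rw [← Icc_eq_image_powerset hT]
    ext S
    simp [and_comm]
  rw [h, sum_image]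
  · have : ∀ S ∈ (P \ T).powerset, p ^ #(T ∪ S) * (1 - p) ^ (#P - #(T ∪ S)) =
        p ^ #T * (p ^ #S * (1 - p) ^ (#(P \ T) - #S)) := by
      intro S hS
      rw [mem_powerset] at hS
      have hd : Disjoint T S := (disjoint_sdiff).mono_right hS
      rw [card_union_of_disjoint hd, card_sdiff_of_subset hT, Nat.sub_add_eq, pow_add, mul_assoc]
    rw [sum_congr rfl this, ← mul_sum, sum_pow_mul_eq_add_pow]
    simp
  · intro S hS S' hS' hh
    simp only [coe_powerset, Set.mem_preimage, Set.mem_powerset_iff, coe_subset] at hS hS'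
    have hd : Disjoint T S := (disjoint_sdiff).mono_right hS
    have hd' : Disjoint T S' := (disjoint_sdiff).mono_right hS'
    have h1 := union_sdiff_cancel_left hd
    have h2 := union_sdiff_cancel_left hd'
    rw [← h1, ← h2]
    simp only at hh
    rw [hh]

lemma ST_sample_sum {α ι : Type*} [DecidableEq α] (P : Finset α) (p : ℝ) (F : Finset ι) (T : ι → Finset α) (c : ℕ)
    (hT : ∀ i ∈ F, T i ⊆ P) (hc : ∀ i ∈ F, #(T i) = c) :
    ∑ S ∈ P.powerset, (p ^ #S * (1 - p) ^ (#P - #S)) * (#(F.filter fun i => T i ⊆ S) : ℝ)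
      = #F * p ^ c := by
  have : ∀ S ∈ P.powerset,
      (p ^ #S * (1 - p) ^ (#P - #S)) * (#(F.filter fun i => T i ⊆ S) : ℝ) =
      ∑ i ∈ F, (if T i ⊆ S then p ^ #S * (1 - p) ^ (#P - #S) else 0) := by
    intro S _
    rw [← sum_filter, sum_const, nsmul_eq_mul, mul_comm]
  rw [sum_congr rfl this, sum_comm]
  rw [sum_congr rfl (fun i hi => (ST_sample P (T i) (hT i hi) p).trans (by rw [hc i hi]))]
  simp

lemma ST_cross2 (V : Finset (ℝ × ℝ)) (E : Finset STEdge)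
    (hE : ∀ e ∈ E, STIsEdge e ∧ e.p ∈ V ∧ e.q ∈ V)
    (h4 : ∀ e ∈ E, ∀ f ∈ E, e ≠ f → STCross e f →
      #({e.p, e.q, f.p, f.q} : Finset (ℝ × ℝ)) = 4) (p : ℝ) (hp0 : 0 ≤ p) (hp1 : p ≤ 1) :
    #E * p ^ 2 ≤ 3 * (#V * p ^ 1) +
      #((E ×ˢ E).filter fun t => t.1 ≠ t.2 ∧ STCross t.1 t.2) * p ^ 4 := by
  rw [← ST_sample_sum V p E (fun e => {e.p, e.q}) 2,
    ← ST_sample_sum V p V (fun v => {v}) 1,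
    ← ST_sample_sum V p ((E ×ˢ E).filter fun t => t.1 ≠ t.2 ∧ STCross t.1 t.2)
      (fun t => {t.1.p, t.1.q, t.2.p, t.2.q}) 4, mul_sum, ← sum_add_distrib]
  · apply sum_le_sum
    intro S hS
    rw [mem_powerset] at hS
    have hw : 0 ≤ p ^ #S * (1 - p) ^ (#V - #S) := by
      have : 0 ≤ 1 - p := by linarith
      positivity
    have key := ST_cross1 S (E.filter fun e => ({e.p, e.q} : Finset (ℝ × ℝ)) ⊆ S) (by
      intro e he
      obtain ⟨he, hs⟩ := mem_filter.1 he
      exact ⟨(hE e he).1, hs (by simp), hs (by simp)⟩)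
    have hV : (V.filter fun v => ({v} : Finset (ℝ × ℝ)) ⊆ S) = S := by
      ext v
      simp only [mem_filter, singleton_subset_iff]
      exact ⟨fun h => h.2, fun h => ⟨hS h, h⟩⟩
    have hXX : (((E.filter fun e => ({e.p, e.q} : Finset (ℝ × ℝ)) ⊆ S) ×ˢ
        (E.filter fun e => ({e.p, e.q} : Finset (ℝ × ℝ)) ⊆ S)).filter
          fun t => t.1 ≠ t.2 ∧ STCross t.1 t.2) =
        (((E ×ˢ E).filter fun t => t.1 ≠ t.2 ∧ STCross t.1 t.2).filter
          fun t => ({t.1.p, t.1.q, t.2.p, t.2.q} : Finset (ℝ × ℝ)) ⊆ S) := by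
      ext t
      simp only [mem_filter, mem_product, insert_subset_iff, singleton_subset_iff]
      tauto
    rw [hXX] at key
    rw [hV]
    have key' : (#(E.filter fun e => ({e.p, e.q} : Finset (ℝ × ℝ)) ⊆ S) : ℝ) ≤
      3 * #S + #(((E ×ˢ E).filter fun t => t.1 ≠ t.2 ∧ STCross t.1 t.2).filter
          fun t => ({t.1.p, t.1.q, t.2.p, t.2.q} : Finset (ℝ × ℝ)) ⊆ S) := by
      exact_mod_cast key
    have := mul_le_mul_of_nonneg_left key' hw
    linarith
  · intro t ht
    simp only [mem_filter, mem_product] at ht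
    obtain ⟨⟨h1, h2⟩, _⟩ := ht
    simp [insert_subset_iff, hE _ h1, hE _ h2]
  · intro t ht
    simp only [mem_filter, mem_product] at ht
    exact h4 _ ht.1.1 _ ht.1.2 ht.2.1 ht.2.2
  · intro v hv
    simpa using hv
  · intro v hv
    simp
  · intro e he
    simp [insert_subset_iff, hE _ he]
  · intro e he
    rw [card_pair]
    intro h
    have := (hE e he).1.1
    rw [h] at this
    exact lt_irrefl _ this

/-- The edges joining consecutive points of `P` on lines of `M`. -/
noncomputable def STEdges (P M : Finset (ℝ × ℝ)) : Finset STEdge :=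
  ((P ×ˢ P ×ˢ M).image (fun t => STEdge.mk t.1 t.2.1 t.2.2)).filter fun e =>
    STIsEdge e ∧ ∀ r ∈ P, STInc r e.m → e.p.1 < r.1 → r.1 < e.q.1 → False

lemma mem_STEdges (P M : Finset (ℝ × ℝ)) (e : STEdge) : e ∈ STEdges P M ↔
    (e.p ∈ P ∧ e.q ∈ P ∧ e.m ∈ M) ∧ STIsEdge e ∧
      ∀ r ∈ P, STInc r e.m → e.p.1 < r.1 → r.1 < e.q.1 → False := by
  unfold STEdges
  rw [mem_filter, mem_image]
  constructor
  · rintro ⟨⟨t, ht, rfl⟩, h⟩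
    simp only [mem_product] at ht
    exact ⟨ht, h⟩
  · rintro ⟨h1, h2⟩
    exact ⟨⟨(e.p, e.q, e.m), by simpa using h1, rfl⟩, h2⟩

lemma STEdges_consec (P M : Finset (ℝ × ℝ)) (e f : STEdge) (he : e ∈ STEdges P M)
    (hf : f ∈ STEdges P M) (hm : e.m = f.m) (x : ℝ) (h1 : e.p.1 < x) (h2 : x < e.q.1)
    (h3 : f.p.1 < x) (h4 : x < f.q.1) : e = f := by
  obtain ⟨⟨e1, e2, e3⟩, ⟨e4, e5, e6⟩, e7⟩ := (mem_STEdges P M e).1 he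
  obtain ⟨⟨f1, f2, f3⟩, ⟨f4, f5, f6⟩, f7⟩ := (mem_STEdges P M f).1 hf
  have hp : e.p.1 = f.p.1 := by
    rcases lt_trichotomy e.p.1 f.p.1 with h | h | h
    · exact (e7 f.p f1 (by rw [hm]; exact f5) h (by linarith)).elim
    · exact h
    · exact (f7 e.p e1 (by rw [← hm]; exact e5) h (by linarith)).elim
  have hq : e.q.1 = f.q.1 := by
    rcases lt_trichotomy e.q.1 f.q.1 with h | h | h
    · exact (f7 e.q e2 (by rw [← hm]; exact e6) (by linarith) h).elim
    · exact h
    · exact (e7 f.q f2 (by rw [hm]; exact f6) (by linarith) h).elim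
  have hp2 : e.p = f.p := by
    refine Prod.ext hp ?_
    unfold STInc at *
    rw [e5, f5, hm, hp]
  have hq2 : e.q = f.q := by
    refine Prod.ext hq ?_
    unfold STInc at *
    rw [e6, f6, hm, hq]
  cases e; cases f
  simp_all

lemma ST_lines_unique (m m' : ℝ × ℝ) (x x' : ℝ) (hne : m ≠ m')
    (h : m.1 * x + m.2 = m'.1 * x + m'.2) (h' : m.1 * x' + m.2 = m'.1 * x' + m'.2) : x = x' := by
  by_contra hx
  have hs : (m.1 - m'.1) * (x - x') = 0 := by linarith
  have h1 : m.1 = m'.1 := by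
    rcases mul_eq_zero.1 hs with h | h
    · linarith
    · exact (hx (by linarith)).elim
  apply hne
  refine Prod.ext h1 ?_
  rw [h1] at h
  linarith

lemma STEdges_cross_ne (P M : Finset (ℝ × ℝ)) (e f : STEdge) (he : e ∈ STEdges P M)
    (hf : f ∈ STEdges P M) (hne : e ≠ f) (hc : STCross e f) : e.m ≠ f.m := by
  intro hm
  obtain ⟨x, h1, h2, h3, h4, h5⟩ := hc
  exact hne (STEdges_consec P M e f he hf hm x h1 h2 h3 h4)

lemma STEdges_four (P M : Finset (ℝ × ℝ)) (e f : STEdge) (he : e ∈ STEdges P M)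
    (hf : f ∈ STEdges P M) (hne : e ≠ f) (hc : STCross e f) :
    #({e.p, e.q, f.p, f.q} : Finset (ℝ × ℝ)) = 4 := by
  have hm := STEdges_cross_ne P M e f he hf hne hc
  obtain ⟨⟨e1, e2, e3⟩, ⟨e4, e5, e6⟩, e7⟩ := (mem_STEdges P M e).1 he
  obtain ⟨⟨f1, f2, f3⟩, ⟨f4, f5, f6⟩, f7⟩ := (mem_STEdges P M f).1 hf
  obtain ⟨x, h1, h2, h3, h4, h5⟩ := hc
  unfold STInc at *
  have a1 : e.p ≠ e.q := by intro h; rw [h] at e4; exact lt_irrefl _ e4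
  have a2 : f.p ≠ f.q := by intro h; rw [h] at f4; exact lt_irrefl _ f4
  have a3 : e.p ≠ f.q := by intro h; rw [h] at h1; linarith
  have a4 : e.q ≠ f.p := by intro h; rw [h] at h2; linarith
  have a5 : e.p ≠ f.p := by
    intro h
    have := ST_lines_unique e.m f.m x e.p.1 hm h5 (by rw [← e5, h, ← f5])
    linarith
  have a6 : e.q ≠ f.q := by
    intro h
    have := ST_lines_unique e.m f.m x e.q.1 hm h5 (by rw [← e6, h, ← f6])
    linarith
  rw [card_insert_of_notMem, card_insert_of_notMem, card_pair a2]
  · simp [a4, a6]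
  · simp [a1, a3, a5]

lemma STEdges_cross_card (P M : Finset (ℝ × ℝ)) :
    #((STEdges P M ×ˢ STEdges P M).filter fun t => t.1 ≠ t.2 ∧ STCross t.1 t.2) ≤ #M ^ 2 := by
  rw [sq, ← card_product]
  refine card_le_card_of_injOn (fun t => (t.1.m, t.2.m)) ?_ ?_
  · intro t ht
    simp only [coe_filter, Set.mem_ofPred_eq, mem_product] at ht
    simp only [coe_product, Set.mem_prod, mem_coe]
    exact ⟨((mem_STEdges P M _).1 ht.1.1).1.2.2, ((mem_STEdges P M _).1 ht.1.2).1.2.2⟩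
  · rintro ⟨e, f⟩ ht ⟨e', f'⟩ ht' hh
    simp only [coe_filter, Set.mem_ofPred_eq, mem_product] at ht ht'
    simp only [Prod.mk.injEq] at hh
    obtain ⟨⟨he, hf⟩, hne, hc⟩ := ht
    obtain ⟨⟨he', hf'⟩, hne', hc'⟩ := ht'
    have hm := STEdges_cross_ne P M e f he hf hne hc
    obtain ⟨x, h1, h2, h3, h4, h5⟩ := hc
    obtain ⟨x', h1', h2', h3', h4', h5'⟩ := hc'
    rw [← hh.1, ← hh.2] at h5'
    have hx := ST_lines_unique e.m f.m x x' hm h5 h5'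
    subst hx
    rw [STEdges_consec P M e e' he he' hh.1 x h1 h2 h1' h2',
      STEdges_consec P M f f' hf hf' hh.2 x h3 h4 h3' h4']

lemma STEdges_card (P M : Finset (ℝ × ℝ)) :
    #((P ×ˢ M).filter fun t => STInc t.1 t.2) ≤ #M + #(STEdges P M) := by
  let N : (ℝ × ℝ) × (ℝ × ℝ) → Prop := fun t => ∃ q ∈ P, STInc q t.2 ∧ t.1.1 < q.1
  have hsplit := card_filter_add_card_filter_not
    (s := (P ×ˢ M).filter fun t => STInc t.1 t.2) N
  have h1 : #(((P ×ˢ M).filter fun t => STInc t.1 t.2).filter fun t => ¬ N t) ≤ #M := by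
    refine card_le_card_of_injOn Prod.snd ?_ ?_
    · intro t ht
      simp only [coe_filter, Set.mem_ofPred_eq, mem_filter, mem_product] at ht
      exact ht.1.1.2
    · rintro ⟨p, m⟩ ht ⟨p', m'⟩ ht' hh
      simp only [coe_filter, Set.mem_ofPred_eq, mem_filter, mem_product, N] at ht ht'
      simp only at hh
      subst hh
      obtain ⟨⟨⟨hp, hm⟩, hi⟩, hn⟩ := ht
      obtain ⟨⟨⟨hp', hm'⟩, hi'⟩, hn'⟩ := ht'
      push Not at hn hn'
      have hx : p.1 = p'.1 := le_antisymm (hn' p hp hi) (hn p' hp' hi')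
      have : p = p' := by
        refine Prod.ext hx ?_
        unfold STInc at *
        rw [hi, hi', hx]
      rw [this]
  have h2 : #(((P ×ˢ M).filter fun t => STInc t.1 t.2).filter N) ≤ #(STEdges P M) := by
    refine (card_le_card ?_).trans (card_image_le (f := fun e : STEdge => (e.p, e.m)))
    rintro ⟨p, m⟩ ht
    simp only [mem_filter, mem_product, N] at ht
    obtain ⟨⟨⟨hp, hm⟩, hi⟩, q0, hq0, hq1, hq2⟩ := ht
    obtain ⟨q, hq, hqmin⟩ := exists_min_image (P.filter fun q => STInc q m ∧ p.1 < q.1)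
      (fun q => q.1) ⟨q0, by simp [hq0, hq1, hq2]⟩
    simp only [mem_filter] at hq hqmin
    refine mem_image.2 ⟨⟨p, q, m⟩, ?_, rfl⟩
    rw [mem_STEdges]
    refine ⟨⟨hp, hq.1, hm⟩, ⟨hq.2.2, hi, hq.2.1⟩, ?_⟩
    intro r hr hrm h1 h2
    have := hqmin r ⟨hr, hrm, h1⟩
    exact absurd h2 (not_lt.2 this)
  omega

lemma ST_param (P M : Finset (ℝ × ℝ)) (k : ℝ) (hk : 1 ≤ k) :
    (#((P ×ˢ M).filter fun t => STInc t.1 t.2) : ℝ) ≤ #M + 3 * k * #P + #M ^ 2 / k ^ 2 := by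
  have hk0 : 0 < k := by linarith
  have h := ST_cross2 P (STEdges P M) (by
    intro e he
    have := (mem_STEdges P M e).1 he
    exact ⟨this.2.1, this.1.1, this.1.2.1⟩)
    (fun e he f hf => STEdges_four P M e f he hf) (1 / k) (by positivity)
    (by rw [div_le_one hk0]; exact hk)
  have hx : (#((STEdges P M ×ˢ STEdges P M).filter fun t => t.1 ≠ t.2 ∧ STCross t.1 t.2) : ℝ)
      ≤ #M ^ 2 := by exact_mod_cast STEdges_cross_card P M
  have hc : (#((P ×ˢ M).filter fun t => STInc t.1 t.2) : ℝ) ≤ #M + #(STEdges P M) := by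
    exact_mod_cast STEdges_card P M
  have h' : (#(STEdges P M) : ℝ) * (1 / k) ^ 2 ≤ 3 * (#P * (1 / k) ^ 1) + #M ^ 2 * (1 / k) ^ 4 :=
    h.trans (by gcongr)
  have h'' := mul_le_mul_of_nonneg_right h' (sq_nonneg k)
  have e1 : (#(STEdges P M) : ℝ) * (1 / k) ^ 2 * k ^ 2 = #(STEdges P M) := by field_simp
  have e2 : (3 * ((#P : ℝ) * (1 / k) ^ 1) + #M ^ 2 * (1 / k) ^ 4) * k ^ 2 =
      3 * k * #P + #M ^ 2 / k ^ 2 := by field_simp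
  rw [e1, e2] at h''
  linarith

lemma ST_plain (P M : Finset (ℝ × ℝ)) :
    (#((P ×ˢ M).filter fun t => STInc t.1 t.2) : ℝ) ≤
      4 * ((#P : ℝ) ^ ((2 : ℝ) / 3) * (#M : ℝ) ^ ((2 : ℝ) / 3)) + 3 * #P + #M := by
  rcases P.eq_empty_or_nonempty with rfl | hP
  · simp
  rcases M.eq_empty_or_nonempty with rfl | hM
  · simp
  have hP0 : (0 : ℝ) < #P := by exact_mod_cast hP.card_pos
  have hM0 : (0 : ℝ) < #M := by exact_mod_cast hM.card_pos
  obtain ⟨u, hu, hu3⟩ : ∃ u : ℝ, 0 < u ∧ u ^ 3 = #P :=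
    ⟨(#P : ℝ) ^ ((1 : ℝ) / 3), by positivity, by
      rw [← Real.rpow_natCast, ← Real.rpow_mul hP0.le]; norm_num⟩
  obtain ⟨v, hv, hv3⟩ : ∃ u : ℝ, 0 < u ∧ u ^ 3 = #M :=
    ⟨(#M : ℝ) ^ ((1 : ℝ) / 3), by positivity, by
      rw [← Real.rpow_natCast, ← Real.rpow_mul hM0.le]; norm_num⟩
  have hu2 : (#P : ℝ) ^ ((2 : ℝ) / 3) = u ^ 2 := by
    rw [← hu3, ← Real.rpow_natCast, ← Real.rpow_mul hu.le]
    norm_num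
  have hv2 : (#M : ℝ) ^ ((2 : ℝ) / 3) = v ^ 2 := by
    rw [← hv3, ← Real.rpow_natCast, ← Real.rpow_mul hv.le]
    norm_num
  have hk := ST_param P M (1 + v ^ 2 / u) (by have : 0 < v ^ 2 / u := by positivity
                                              linarith)
  rw [hu2, hv2]
  have h1 : (#M : ℝ) ^ 2 / (1 + v ^ 2 / u) ^ 2 ≤ u ^ 2 * v ^ 2 := by
    have : (#M : ℝ) ^ 2 / (1 + v ^ 2 / u) ^ 2 ≤ (#M : ℝ) ^ 2 / (v ^ 2 / u) ^ 2 := by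
      gcongr
      linarith
    refine this.trans (le_of_eq ?_)
    rw [← hv3]
    field_simp
  have h2 : 3 * (1 + v ^ 2 / u) * (#P : ℝ) = 3 * #P + 3 * (u ^ 2 * v ^ 2) := by
    rw [← hu3]
    field_simp
  linarith

lemma ST_sets (P : Finset (ℝ × ℝ)) (L : Finset (Set (ℝ × ℝ))) (hL : ∀ l ∈ L, IsAffineLine l) :
    (#((P ×ˢ L).filter fun pl => pl.1 ∈ pl.2) : ℝ) ≤
      4 * ((#P : ℝ) ^ ((2 : ℝ) / 3) * (#L : ℝ) ^ ((2 : ℝ) / 3)) + 4 * #P + #L := by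
  let N : (ℝ × ℝ) × Set (ℝ × ℝ) → Prop := fun t => ∃ m : ℝ × ℝ, t.2 = {p | STInc p m}
  have hsplit := card_filter_add_card_filter_not
    (s := (P ×ˢ L).filter fun pl => pl.1 ∈ pl.2) N
  have h1 : #(((P ×ˢ L).filter fun pl => pl.1 ∈ pl.2).filter fun t => ¬ N t) ≤ #P := by
    refine card_le_card_of_injOn Prod.fst ?_ ?_
    · intro t ht
      simp only [coe_filter, Set.mem_ofPred_eq, mem_filter, mem_product] at ht
      exact ht.1.1.1
    · have hv : ∀ p : ℝ × ℝ, ∀ l ∈ L, p ∈ l → ¬ N (p, l) → l = {r | r.1 = p.1} := by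
        intro p l hl hp hn
        obtain ⟨a, b, c, hab, rfl⟩ := hL l hl
        have hb : b = 0 := by
          by_contra hb
          apply hn
          refine ⟨(-a / b, c / b), ?_⟩
          ext r
          simp only [Set.mem_ofPred_eq, STInc]
          constructor
          · intro h
            field_simp
            linarith
          · intro h
            rw [h]
            field_simp
            ring
        subst hb
        have ha : a ≠ 0 := by
          rintro rfl
          exact hab rfl
        simp only [Set.mem_ofPred_eq] at hp
        ext r
        simp only [Set.mem_ofPred_eq]
        constructor
        · intro h
          apply mul_left_cancel₀ ha
          linarith
        · intro h
          rw [h]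
          linarith
      rintro ⟨p, l⟩ ht ⟨p', l'⟩ ht' hh
      simp only [coe_filter, Set.mem_ofPred_eq, mem_filter, mem_product] at ht ht'
      simp only at hh
      subst hh
      rw [hv p l ht.1.1.2 ht.1.2 ht.2, hv p l' ht'.1.1.2 ht'.1.2 ht'.2]
  have hch : ∀ l : Set (ℝ × ℝ), ∃ m : ℝ × ℝ, (∃ m : ℝ × ℝ, l = {p | STInc p m}) →
      l = {p | STInc p m} := by
    intro l
    by_cases h : ∃ m : ℝ × ℝ, l = {p | STInc p m}
    · obtain ⟨m, hm⟩ := h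
      exact ⟨m, fun _ => hm⟩
    · exact ⟨0, fun h' => (h h').elim⟩
  choose m hm using hch
  have h2 : #(((P ×ˢ L).filter fun pl => pl.1 ∈ pl.2).filter N) ≤
      #((P ×ˢ L.image m).filter fun t => STInc t.1 t.2) := by
    refine card_le_card_of_injOn (fun t => (t.1, m t.2)) ?_ ?_
    · rintro ⟨p, l⟩ ht
      simp only [coe_filter, Set.mem_ofPred_eq, mem_filter, mem_product] at ht ⊢
      obtain ⟨⟨⟨hp, hl⟩, hpl⟩, hn⟩ := ht
      refine ⟨⟨hp, mem_image_of_mem m hl⟩, ?_⟩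
      rw [hm l hn] at hpl
      exact hpl
    · rintro ⟨p, l⟩ ht ⟨p', l'⟩ ht' hh
      simp only [coe_filter, Set.mem_ofPred_eq, mem_filter, mem_product] at ht ht'
      simp only [Prod.mk.injEq] at hh
      rw [hh.1, hm l ht.2, hm l' ht'.2, hh.2]
  have h3 := ST_plain P (L.image m)
  have h4 : (#(L.image m) : ℝ) ≤ #L := by exact_mod_cast card_image_le
  have h5 : (#(L.image m) : ℝ) ^ ((2 : ℝ) / 3) ≤ (#L : ℝ) ^ ((2 : ℝ) / 3) := by gcongr
  have h6 : (#P : ℝ) ^ ((2 : ℝ) / 3) * (#(L.image m) : ℝ) ^ ((2 : ℝ) / 3) ≤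
      (#P : ℝ) ^ ((2 : ℝ) / 3) * (#L : ℝ) ^ ((2 : ℝ) / 3) := by gcongr
  have h7 : (#((P ×ˢ L).filter fun pl => pl.1 ∈ pl.2) : ℝ) ≤
      #P + #((P ×ˢ L.image m).filter fun t => STInc t.1 t.2) := by
    have : #((P ×ˢ L).filter fun pl => pl.1 ∈ pl.2) ≤
      #P + #((P ×ˢ L.image m).filter fun t => STInc t.1 t.2) := by omega
    exact_mod_cast this
  linarith

/-- Discrete layer-cake inequality. -/
lemma ST_layer {α : Type*} (P : Finset α) (w g : α → ℝ) (A B W : ℝ) (hW : ∀ p ∈ P, w p ≤ W)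
    (hW0 : 0 ≤ W) (hw : ∀ p ∈ P, 0 ≤ w p) (h : ∀ S ⊆ P, ∑ p ∈ S, g p ≤ A * #S + B) :
    ∑ p ∈ P, w p * g p ≤ A * ∑ p ∈ P, w p + B * W := by
  have h1 : ∑ p ∈ P, w p * (g p - A) ≤ ∑ p ∈ P, if A < g p then W * (g p - A) else 0 := by
    apply sum_le_sum
    intro p hp
    split_ifs with hg
    · exact mul_le_mul_of_nonneg_right (hW p hp) (by linarith)
    · exact mul_nonpos_of_nonneg_of_nonpos (hw p hp) (by linarith)
  rw [← sum_filter, ← mul_sum, sum_sub_distrib, sum_const, nsmul_eq_mul] at h1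
  have h2 := h (P.filter fun p => A < g p) (filter_subset _ _)
  have h3 : ∑ p ∈ P, w p * (g p - A) = ∑ p ∈ P, w p * g p - A * ∑ p ∈ P, w p := by
    rw [mul_sum, ← sum_sub_distrib]
    exact sum_congr rfl fun p _ => by ring
  rw [h3] at h1
  nlinarith

lemma ST_tangent (x w W : ℝ) (hx : 0 ≤ x) (hw : 0 < w) (hW : 0 < W) :
    x ^ ((2 : ℝ) / 3) ≤ (W / w) ^ (-(1 : ℝ) / 3) * x + (W / w) ^ ((2 : ℝ) / 3) := by
  set a := W / w with ha
  have ha0 : 0 < a := by positivity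
  rcases le_total x a with h | h
  · have : x ^ ((2 : ℝ) / 3) ≤ a ^ ((2 : ℝ) / 3) := by gcongr
    have : 0 ≤ a ^ (-(1 : ℝ) / 3) * x := by positivity
    linarith
  · have hx0 : 0 < x := by linarith
    have h1 : x ^ (-(1 : ℝ) / 3) ≤ a ^ (-(1 : ℝ) / 3) :=
      Real.rpow_le_rpow_of_nonpos ha0 h (by norm_num)
    have h2 : x ^ ((2 : ℝ) / 3) = x ^ (-(1 : ℝ) / 3) * x := by
      rw [← Real.rpow_add_one hx0.ne']; norm_num
    rw [h2]
    have : 0 ≤ a ^ ((2 : ℝ) / 3) := by positivity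
    have := mul_le_mul_of_nonneg_right h1 hx
    linarith

lemma ST_tangent_eval (w W : ℝ) (hw : 0 < w) (hW : 0 < W) :
    (W / w) ^ (-(1 : ℝ) / 3) * W + (W / w) ^ ((2 : ℝ) / 3) * w =
      2 * (w ^ ((1 : ℝ) / 3) * W ^ ((2 : ℝ) / 3)) := by
  have h1 : (W / w) ^ ((2 : ℝ) / 3) * w = w ^ ((1 : ℝ) / 3) * W ^ ((2 : ℝ) / 3) := by
    have : w = w ^ ((1 : ℝ) / 3) * w ^ ((2 : ℝ) / 3) := by
      rw [← Real.rpow_add hw]; norm_num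
    rw [Real.div_rpow hW.le hw.le]
    nth_rewrite 2 [this]
    have : 0 < w ^ ((2 : ℝ) / 3) := by positivity
    field_simp
  have h2 : (W / w) ^ (-(1 : ℝ) / 3) * W = (W / w) ^ ((2 : ℝ) / 3) * w := by
    have h0 : 0 < W / w := by positivity
    have : (W / w) ^ ((2 : ℝ) / 3) = (W / w) ^ (-(1 : ℝ) / 3) * (W / w) := by
      rw [← Real.rpow_add_one h0.ne']; norm_num
    rw [this]
    field_simp
  rw [h2, h1]
  ring

theorem stmt_6 :
    ∃ C : ℝ, 0 < C ∧
      ∀ (P : Finset (ℝ × ℝ)) (L : Finset (Set (ℝ × ℝ)))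
        (hP : P.Nonempty) (hL : L.Nonempty)
        (wp : (ℝ × ℝ) → ℝ) (wl : Set (ℝ × ℝ) → ℝ),
        (∀ l ∈ L, IsAffineLine l) →
        (∀ p ∈ P, 0 < wp p) → (∀ l ∈ L, 0 < wl l) →
        (∑ pl ∈ (P ×ˢ L).filter fun pl => pl.1 ∈ pl.2, wp pl.1 * wl pl.2)
          ≤ C * (((P.sup' hP wp) * (L.sup' hL wl)) ^ ((1 : ℝ) / 3)
                  * ((∑ p ∈ P, wp p) * (∑ l ∈ L, wl l)) ^ ((2 : ℝ) / 3)
              + (P.sup' hP wp) * (∑ l ∈ L, wl l)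
              + (L.sup' hL wl) * (∑ p ∈ P, wp p)) := by
  refine ⟨16, by norm_num, ?_⟩
  intro P L hP hL wp wl hline hwp hwl
  have hWP : 0 < ∑ p ∈ P, wp p := sum_pos hwp hP
  have hWL : 0 < ∑ l ∈ L, wl l := sum_pos hwl hL
  have hmP : ∀ p ∈ P, wp p ≤ P.sup' hP wp := fun p hp => le_sup' wp hp
  have hmL : ∀ l ∈ L, wl l ≤ L.sup' hL wl := fun l hl => le_sup' wl hl
  have hwP : 0 < P.sup' hP wp := by
    obtain ⟨p, hp⟩ := hP
    exact (hwp p hp).trans_le (hmP p hp)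
  have hwL : 0 < L.sup' hL wl := by
    obtain ⟨p, hp⟩ := hL
    exact (hwl p hp).trans_le (hmL p hp)
  set wP := P.sup' hP wp
  set wL := L.sup' hL wl
  set WP := ∑ p ∈ P, wp p
  set WL := ∑ l ∈ L, wl l
  have evP := ST_tangent_eval wP WP hwP hWP
  have evL := ST_tangent_eval wL WL hwL hWL
  have tP := fun x hx => ST_tangent x wP WP hx hwP hWP
  have tL := fun x hx => ST_tangent x wL WL hx hwL hWL
  have hα : 0 ≤ (WP / wP) ^ (-(1 : ℝ) / 3) := by positivity
  have hβ : 0 ≤ (WP / wP) ^ ((2 : ℝ) / 3) := by positivity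
  have hγ : 0 ≤ (WL / wL) ^ (-(1 : ℝ) / 3) := by positivity
  have hδ : 0 ≤ (WL / wL) ^ ((2 : ℝ) / 3) := by positivity
  set α := (WP / wP) ^ (-(1 : ℝ) / 3)
  set β := (WP / wP) ^ ((2 : ℝ) / 3)
  set γ := (WL / wL) ^ (-(1 : ℝ) / 3)
  set δ := (WL / wL) ^ ((2 : ℝ) / 3)
  -- weights on the points only
  have step1 : ∀ L' ⊆ L, ∑ p ∈ P, wp p * (∑ l ∈ L', if p ∈ l then (1 : ℝ) else 0) ≤
      (4 * (α * (γ * #L' + δ)) + 4) * WP + (4 * (β * (γ * #L' + δ)) + #L') * wP := by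
    intro L' hL'
    apply ST_layer P wp _ _ _ _ hmP hwP.le (fun p hp => (hwp p hp).le)
    intro S hS
    have hcount : ∑ p ∈ S, (∑ l ∈ L', if p ∈ l then (1 : ℝ) else 0) =
        #((S ×ˢ L').filter fun pl => pl.1 ∈ pl.2) := by
      rw [← sum_product (f := fun pl : (ℝ × ℝ) × Set (ℝ × ℝ) => if pl.1 ∈ pl.2 then (1 : ℝ) else 0)]
      simp
    rw [hcount]
    have h1 := ST_sets S L' (fun l hl => hline l (hL' hl))
    have h2 := tP (#S) (by positivity)
    have h3 := tL (#L') (by positivity)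
    have h4 : (#S : ℝ) ^ ((2 : ℝ) / 3) * (#L' : ℝ) ^ ((2 : ℝ) / 3) ≤
        (α * #S + β) * (γ * #L' + δ) := by gcongr
    linarith
  have step2 := ST_layer L wl (fun l => ∑ p ∈ P, if p ∈ l then wp p else 0)
    (4 * (γ * (α * WP + β * wP)) + wP) (4 * (δ * (α * WP + β * wP)) + 4 * WP) wL hmL hwL.le
    (fun l hl => (hwl l hl).le) (by
      intro L' hL'
      have := step1 L' hL'
      have e : ∑ l ∈ L', ∑ p ∈ P, (if p ∈ l then wp p else 0) =
          ∑ p ∈ P, wp p * (∑ l ∈ L', if p ∈ l then (1 : ℝ) else 0) := by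
        rw [sum_comm]
        refine sum_congr rfl fun p _ => ?_
        rw [mul_sum]
        exact sum_congr rfl fun l _ => by split_ifs <;> simp
      rw [e]
      linarith)
  have hI : (∑ pl ∈ (P ×ˢ L).filter fun pl => pl.1 ∈ pl.2, wp pl.1 * wl pl.2) =
      ∑ l ∈ L, wl l * ∑ p ∈ P, (if p ∈ l then wp p else 0) := by
    rw [sum_filter, sum_product, sum_comm]
    refine sum_congr rfl fun l _ => ?_
    rw [mul_sum]
    exact sum_congr rfl fun p _ => by split_ifs <;> simp [mul_comm]
  rw [hI, Real.mul_rpow hwP.le hwL.le, Real.mul_rpow hWP.le hWL.le]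
  rw [evP] at step2
  have e : (4 * (γ * (2 * (wP ^ ((1 : ℝ) / 3) * WP ^ ((2 : ℝ) / 3)))) + wP) * WL +
      (4 * (δ * (2 * (wP ^ ((1 : ℝ) / 3) * WP ^ ((2 : ℝ) / 3)))) + 4 * WP) * wL =
      8 * (wP ^ ((1 : ℝ) / 3) * WP ^ ((2 : ℝ) / 3)) * (γ * WL + δ * wL) + wP * WL + 4 * (wL * WP) := by
    ring
  have e' := step2.trans_eq e
  rw [evL] at e'
  have p1 : 0 ≤ wP * WL := by positivity
  have p2 : 0 ≤ wL * WP := by positivity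
  nlinarith
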